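/- Let p be the BFW empirical model given by the explicit table in the context. Then: (1) for each party P ∈ {A,B,C}, the single-party output marginal ∑_{other two outputs} p i o depends only on i_P (indeed it equals 1/2 for each value of o_P), so p lies in the causaltope of each of the three indefinite causal orders in which one fixed party acts first and the other two remain in indiscrete order; and yet (2) for every permutation (P₁,P₂,P₃) of the three parties, the only function v : ({0,1}³) → ({0,1}³ → ℝ) with 0 ≤ v i o ≤ p i o for all i,o, with all row sums ∑_o v i o equal across inputs i, and satisfying the causality equations of the total order P₁ ≺ P₂ ≺ P₃ (the marginal of o_{P₁} depends only on i_{P₁}, and the joint marginal of (o_{P₁},o_{P₂}) depends only on (i_{P₁},i_{P₂})), is v = 0. Hence p has causal fraction zero over every total causal order on the three parties. -/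

import Mathlib

/-- The BFW empirical model on three parties indexed by `Fin 3` (A = 0, B = 1, C = 2),
with binary inputs and outputs: the 50%-50% mixture of the circular "identity" process
`o_P = i_{P-1}` (i.e. `o k = i (k+2)`) and the circular "bitflip" process
`o k = ¬ i (k+2)`.  Explicitly, each input row assigns probability 1/2 to each of two
output triples: 000 : {000, 111}; 001 : {011, 100}; 010 : {001, 110}; 011 : {010, 101};
100 : {010, 101}; 101 : {001, 110}; 110 : {011, 100}; 111 : {000, 111}. -/
noncomputable def bfw : (Fin 3 → Bool) → (Fin 3 → Bool) → ℝ := fun i o =>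
  if o = (fun k => i (k + 2)) ∨ o = (fun k => !(i (k + 2))) then 1/2 else 0

/-- Support predicate of the model. -/
def bfwS (i o : Fin 3 → Bool) : Prop :=
  o = (fun k => i (k + 2)) ∨ o = (fun k => !(i (k + 2)))

theorem bfwS_diff (i o o' : Fin 3 → Bool) (a b c : Fin 3) (hab : a ≠ b) (hac : a ≠ c)
    (hbc : b ≠ c) (h : bfwS i o) (ha : o' a = o a) (hb : o' b = o b) :
    ¬ bfwS (Function.update i c (!(i c))) o' := by
  rintro h'
  rcases h with rfl | rfl <;> rcases h' with rfl | rfl <;>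
  fin_cases a <;> fin_cases b <;> fin_cases c <;>
  simp [Function.update, Fin.ext_iff] at * 

theorem bfw_zero {i o : Fin 3 → Bool} (h : ¬ bfwS i o) : bfw i o = 0 := if_neg h

theorem bfw_marg (i : Fin 3 → Bool) (P : Fin 3) (b : Bool) :
    ∑ o : Fin 3 → Bool, (if o P = b then bfw i o else 0) = 1/2 := by
  have key : ∀ o : Fin 3 → Bool, (if o P = b then bfw i o else 0)
      = if o = (fun k => xor (i (k + 2)) (xor (i (P + 2)) b)) then 1/2 else 0 := by
    intro o
    by_cases h : o = (fun k => xor (i (k + 2)) (xor (i (P + 2)) b))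
    · rw [if_pos h]
      subst h
      rw [if_pos (by simp)]
      refine if_pos ?_
      cases i (P + 2) <;> cases b <;> simp
    · rw [if_neg h]
      split_ifs with hP
      · apply bfw_zero
        rintro (rfl | rfl) <;> apply h <;> subst hP <;> funext k <;> simp
      · rfl
  simp [key]

/-- (1) each single-party output marginal of the BFW model equals 1/2
regardless of all inputs (so the BFW model lies in the causaltope of each of the three
indefinite causal orders where one fixed party acts first and the other two remain in
indiscrete order); yet (2) for every permutation `σ` of the parties, the only
componentwise-dominated, quasi-normalised `v ≤ p` satisfying the causality equations of
the total order `σ 0 ≺ σ 1 ≺ σ 2` is `v = 0`: the BFW model has causal fraction zero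
over every total causal order. -/
theorem bfw_maximally_causally_inseparable :
    (∀ i : Fin 3 → Bool, ∀ P : Fin 3, ∀ b : Bool,
      ∑ o : Fin 3 → Bool, (if o P = b then bfw i o else 0) = 1/2) ∧
    (∀ σ : Equiv.Perm (Fin 3), ∀ v : (Fin 3 → Bool) → (Fin 3 → Bool) → ℝ,
      (∀ i o, 0 ≤ v i o ∧ v i o ≤ bfw i o) →
      (∀ i i' : Fin 3 → Bool,
        ∑ o : Fin 3 → Bool, v i o = ∑ o : Fin 3 → Bool, v i' o) →
      (∀ i i' : Fin 3 → Bool, i (σ 0) = i' (σ 0) → ∀ b : Bool,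
        ∑ o : Fin 3 → Bool, (if o (σ 0) = b then v i o else 0)
          = ∑ o : Fin 3 → Bool, (if o (σ 0) = b then v i' o else 0)) →
      (∀ i i' : Fin 3 → Bool, i (σ 0) = i' (σ 0) → i (σ 1) = i' (σ 1) →
        ∀ b₀ b₁ : Bool,
        ∑ o : Fin 3 → Bool, (if o (σ 0) = b₀ ∧ o (σ 1) = b₁ then v i o else 0)
          = ∑ o : Fin 3 → Bool, (if o (σ 0) = b₀ ∧ o (σ 1) = b₁ then v i' o else 0)) →
      v = 0) := by
  refine ⟨bfw_marg, ?_⟩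
  intro σ v hv _ _ h2
  funext i o
  show v i o = 0
  by_cases hS : bfwS i o
  · have n01 : σ 0 ≠ σ 1 := fun h => absurd (σ.injective h) (by decide)
    have n02 : σ 0 ≠ σ 2 := fun h => absurd (σ.injective h) (by decide)
    have n12 : σ 1 ≠ σ 2 := fun h => absurd (σ.injective h) (by decide)
    have e := h2 i (Function.update i (σ 2) (!(i (σ 2))))
      (by rw [Function.update_of_ne n02]) (by rw [Function.update_of_ne n12]) (o (σ 0)) (o (σ 1))
    have z : ∑ o' : Fin 3 → Bool, (if o' (σ 0) = o (σ 0) ∧ o' (σ 1) = o (σ 1) then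
        v (Function.update i (σ 2) (!(i (σ 2)))) o' else 0) = 0 := by
      apply Finset.sum_eq_zero
      intro o' _
      split_ifs with h
      · have := bfw_zero (bfwS_diff i o o' _ _ _ n01 n02 n12 hS h.1 h.2)
        exact le_antisymm (this ▸ (hv _ _).2) (hv _ _).1
      · rfl
    rw [z, Finset.sum_eq_zero_iff_of_nonneg] at e
    · simpa using e o (Finset.mem_univ _)
    · intro o' _
      split_ifs
      · exact (hv _ _).1
      · exact le_rfl
  · exact le_antisymm (bfw_zero hS ▸ (hv _ _).2) (hv _ _).1
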